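/- Let h, ū be smooth with h > 0 everywhere, let σ = (h²/3) ḣ with ḣ = h_t + ū·∇h, and let φ be a smooth function with ∇φ = ū + (1/h) ∇σ. If the mass equation h_t + ∇·(h ū) = 0 holds, then the elliptic equation 3σ/h³ − ∇·( (1/h) ∇σ ) = −Δφ holds pointwise. -/

import Mathlib

noncomputable section

/-- Partial derivative in the time variable of a function of `(t, x, y)`. -/
def pT (f : ℝ → ℝ → ℝ → ℝ) : ℝ → ℝ → ℝ → ℝ := fun t x y => deriv (fun s => f s x y) t

/-- Partial derivative in the first space variable of a function of `(t, x, y)`. -/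
def pX (f : ℝ → ℝ → ℝ → ℝ) : ℝ → ℝ → ℝ → ℝ := fun t x y => deriv (fun s => f t s y) x

/-- Partial derivative in the second space variable of a function of `(t, x, y)`. -/
def pY (f : ℝ → ℝ → ℝ → ℝ) : ℝ → ℝ → ℝ → ℝ := fun t x y => deriv (fun s => f t x s) y

/-- Smoothness of a function of `(t, x, y)`. -/
def Smooth3 (f : ℝ → ℝ → ℝ → ℝ) : Prop :=
  ContDiff ℝ (⊤ : ℕ∞) (fun q : ℝ × ℝ × ℝ => f q.1 q.2.1 q.2.2)

/-!
By the product rule the mass equation says `ḣ = -h ∇·ū`, so `3σ/h³ = ḣ/h = -∇·ū`. On the other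
hand `(1/h)∇σ = ∇φ - ū` has divergence `Δφ - ∇·ū`, and subtracting cancels `∇·ū`.
-/

/-- Joint `C^n` regularity of a function of `(t, x, y)`; `Smooth3` is the case `n = ∞`. -/
def ContDiff3 (n : WithTop ℕ∞) (f : ℝ → ℝ → ℝ → ℝ) : Prop :=
  ContDiff ℝ n (fun q : ℝ × ℝ × ℝ => f q.1 q.2.1 q.2.2)

/-- The spatial divergence `∇·u` of the planar field `u = (u1, u2)`. The Laplacian of `f` is
`divXY (pX f) (pY f)`. -/
def divXY (u1 u2 : ℝ → ℝ → ℝ → ℝ) : ℝ → ℝ → ℝ → ℝ :=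
  fun t x y => pX u1 t x y + pY u2 t x y

/-- The material derivative `f_t + u·∇f` of `f` along the planar field `u = (u1, u2)`. -/
def materialDeriv (u1 u2 f : ℝ → ℝ → ℝ → ℝ) : ℝ → ℝ → ℝ → ℝ :=
  fun t x y => pT f t x y + u1 t x y * pX f t x y + u2 t x y * pY f t x y

theorem Smooth3.contDiff3 {f : ℝ → ℝ → ℝ → ℝ} (hf : Smooth3 f) (n : ℕ) : ContDiff3 n f :=
  contDiff_infty.mp hf n

namespace ContDiff3

variable {n : WithTop ℕ∞} {f : ℝ → ℝ → ℝ → ℝ}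

theorem contDiff_x (hf : ContDiff3 n f) (t y : ℝ) : ContDiff ℝ n (fun s => f t s y) :=
  ContDiff.comp (f := fun s : ℝ => (t, s, y)) hf (by fun_prop)

theorem contDiff_y (hf : ContDiff3 n f) (t x : ℝ) : ContDiff ℝ n (fun s => f t x s) :=
  ContDiff.comp (f := fun s : ℝ => (t, x, s)) hf (by fun_prop)

theorem differentiable_x (hf : ContDiff3 n f) (hn : n ≠ 0) (t y : ℝ) :
    Differentiable ℝ (fun s => f t s y) :=
  (hf.contDiff_x t y).differentiable hn

theorem differentiable_y (hf : ContDiff3 n f) (hn : n ≠ 0) (t x : ℝ) :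
    Differentiable ℝ (fun s => f t x s) :=
  (hf.contDiff_y t x).differentiable hn

theorem differentiable_pX (hf : ContDiff3 2 f) (t y : ℝ) :
    Differentiable ℝ (fun s => pX f t s y) :=
  (hf.contDiff_x t y).differentiable_deriv_two

theorem differentiable_pY (hf : ContDiff3 2 f) (t x : ℝ) :
    Differentiable ℝ (fun s => pY f t x s) :=
  (hf.contDiff_y t x).differentiable_deriv_two

end ContDiff3

section Divergence

variable {f u1 u2 v1 v2 : ℝ → ℝ → ℝ → ℝ} {t x y : ℝ}

theorem divXY_sub
    (hu1 : DifferentiableAt ℝ (fun s => u1 t s y) x)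
    (hu2 : DifferentiableAt ℝ (fun s => u2 t x s) y)
    (hv1 : DifferentiableAt ℝ (fun s => v1 t s y) x)
    (hv2 : DifferentiableAt ℝ (fun s => v2 t x s) y) :
    divXY (u1 - v1) (u2 - v2) t x y = divXY u1 u2 t x y - divXY v1 v2 t x y := by
  have sub_x : pX (u1 - v1) t x y = pX u1 t x y - pX v1 t x y := deriv_fun_sub hu1 hv1
  have sub_y : pY (u2 - v2) t x y = pY u2 t x y - pY v2 t x y := deriv_fun_sub hu2 hv2
  simp only [divXY, sub_x, sub_y]
  ring

theorem divXY_mul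
    (hf_x : DifferentiableAt ℝ (fun s => f t s y) x)
    (hf_y : DifferentiableAt ℝ (fun s => f t x s) y)
    (hu1 : DifferentiableAt ℝ (fun s => u1 t s y) x)
    (hu2 : DifferentiableAt ℝ (fun s => u2 t x s) y) :
    divXY (f * u1) (f * u2) t x y =
      u1 t x y * pX f t x y + u2 t x y * pY f t x y + f t x y * divXY u1 u2 t x y := by
  have mul_x : pX (f * u1) t x y = pX f t x y * u1 t x y + f t x y * pX u1 t x y :=
    deriv_fun_mul hf_x hu1
  have mul_y : pY (f * u2) t x y = pY f t x y * u2 t x y + f t x y * pY u2 t x y :=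
    deriv_fun_mul hf_y hu2
  simp only [divXY, mul_x, mul_y]
  ring

theorem materialDeriv_eq_neg_mul_divXY
    (hf_x : DifferentiableAt ℝ (fun s => f t s y) x)
    (hf_y : DifferentiableAt ℝ (fun s => f t x s) y)
    (hu1 : DifferentiableAt ℝ (fun s => u1 t s y) x)
    (hu2 : DifferentiableAt ℝ (fun s => u2 t x s) y)
    (mass : pT f t x y + divXY (f * u1) (f * u2) t x y = 0) :
    materialDeriv u1 u2 f t x y = -(f t x y * divXY u1 u2 t x y) := by
  rw [divXY_mul hf_x hf_y hu1 hu2] at mass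
  rw [materialDeriv]
  linear_combination mass

end Divergence

theorem sgn2d_elliptic_equation_for_sigma_general
    {h u1 u2 σ φ : ℝ → ℝ → ℝ → ℝ}
    (h_reg : ContDiff3 2 h) (u1_reg : ContDiff3 1 u1) (u2_reg : ContDiff3 1 u2)
    (φ_reg : ContDiff3 2 φ)
    (σ_def : σ = fun t x y => (h t x y) ^ 2 / 3 * materialDeriv u1 u2 h t x y)
    (gradφ_x : ∀ t x y, pX φ t x y = u1 t x y + pX σ t x y / h t x y)
    (gradφ_y : ∀ t x y, pY φ t x y = u2 t x y + pY σ t x y / h t x y)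
    {t x y : ℝ} (h_ne : h t x y ≠ 0)
    (mass : pT h t x y + divXY (h * u1) (h * u2) t x y = 0) :
    3 * σ t x y / (h t x y) ^ 3 - divXY (pX σ / h) (pY σ / h) t x y
      = -divXY (pX φ) (pY φ) t x y := by
  have hu1 := u1_reg.differentiable_x one_ne_zero t y x
  have hu2 := u2_reg.differentiable_y one_ne_zero t x y
  have σ_eq : 3 * σ t x y / (h t x y) ^ 3 = -divXY u1 u2 t x y := by
    simp only [σ_def, materialDeriv_eq_neg_mul_divXY
      (h_reg.differentiable_x two_ne_zero t y x) (h_reg.differentiable_y two_ne_zero t x y)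
      hu1 hu2 mass]
    field_simp
  have flux_x : pX σ / h = pX φ - u1 := by
    funext t x y
    exact eq_sub_of_add_eq' (gradφ_x t x y).symm
  have flux_y : pY σ / h = pY φ - u2 := by
    funext t x y
    exact eq_sub_of_add_eq' (gradφ_y t x y).symm
  rw [σ_eq, flux_x, flux_y,
    divXY_sub (φ_reg.differentiable_pX t y x) (φ_reg.differentiable_pY t x y) hu1 hu2]
  ring

/-- For smooth `h > 0`, `ū = (u1, u2)`, with `σ = (h²/3)ḣ` and a smooth potential `φ`
with `∇φ = ū + (1/h)∇σ`, the mass equation implies the elliptic equation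
`3σ/h³ − ∇·((1/h)∇σ) = −Δφ` pointwise. -/
theorem sgn2d_elliptic_equation_for_sigma
    (h u1 u2 : ℝ → ℝ → ℝ → ℝ)
    (h_smooth : Smooth3 h) (u1_smooth : Smooth3 u1) (u2_smooth : Smooth3 u2)
    (h_pos : ∀ t x y, 0 < h t x y)
    (hdot : ℝ → ℝ → ℝ → ℝ)
    (hdot_def : hdot = fun t x y =>
      pT h t x y + u1 t x y * pX h t x y + u2 t x y * pY h t x y)
    (σ : ℝ → ℝ → ℝ → ℝ)
    (σ_def : σ = fun t x y => (h t x y) ^ 2 / 3 * hdot t x y)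
    (φ : ℝ → ℝ → ℝ → ℝ)
    (φ_smooth : Smooth3 φ)
    (gradφ_x : ∀ t x y, pX φ t x y = u1 t x y + pX σ t x y / h t x y)
    (gradφ_y : ∀ t x y, pY φ t x y = u2 t x y + pY σ t x y / h t x y)
    (mass : ∀ t x y,
      pT h t x y + pX (fun t x y => h t x y * u1 t x y) t x y
        + pY (fun t x y => h t x y * u2 t x y) t x y = 0) :
    ∀ t x y,
      3 * σ t x y / (h t x y) ^ 3
        - (pX (fun t x y => pX σ t x y / h t x y) t x y
            + pY (fun t x y => pY σ t x y / h t x y) t x y)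
      = -(pX (pX φ) t x y + pY (pY φ) t x y) := by
  subst hdot_def
  intro t x y
  exact sgn2d_elliptic_equation_for_sigma_general (h_smooth.contDiff3 2) (u1_smooth.contDiff3 1)
    (u2_smooth.contDiff3 1) (φ_smooth.contDiff3 2) σ_def gradφ_x gradφ_y (h_pos t x y).ne'
    ((add_assoc _ _ _).symm.trans (mass t x y))
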